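/- Let u be a weak solution of −div(A∇u) = u in Ω and let δ ∈ (0,1). Suppose there exist C₂ > 0 and R₂ > 1 such that G(ρ) ≥ C₂ ρ^{n−1−δ} for all ρ ≥ R₂. Then there exist C₄ > 0 and R₃ ≥ R₂ such that ∫_{∂B_ρ} (Zu/r)² μ dσ + ∫_{∂B_ρ} u² dσ ≥ C₄ ρ^{−δ} for all ρ ≥ R₃. -/

import Mathlib

open MeasureTheory Metric Filter

noncomputable section

abbrev En (n : ℕ) := EuclideanSpace ℝ (Fin n)

/-- The exterior domain `Ω = {x ∈ ℝⁿ : |x| > 1}`. -/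
def OmegaExt (n : ℕ) : Set (En n) := {x | 1 < ‖x‖}

/-- The quadratic/bilinear form `⟨M ξ, η⟩`. -/
def quadForm {n : ℕ} (M : Matrix (Fin n) (Fin n) ℝ) (ξ η : En n) : ℝ :=
  ∑ i, M.mulVec (fun j => ξ j) i * η i

/-- The conformal factor `μ(x) = ⟨A(x)∇r, ∇r⟩ = ⟨A(x)x, x⟩ / |x|²`. -/
def muA {n : ℕ} (A : En n → Matrix (Fin n) (Fin n) ℝ) (x : En n) : ℝ :=
  quadForm (A x) x x / ‖x‖ ^ 2

/-- The vector field `Z(x) = r(x) A(x)∇r(x) / μ(x) = A(x)x / μ(x)`. -/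
def Zvec {n : ℕ} (A : En n → Matrix (Fin n) (Fin n) ℝ) (x : En n) : En n :=
  (muA A x)⁻¹ • (WithLp.toLp 2 ((A x).mulVec (fun j => x j)) : En n)

/-- The derivative of `f` along `Z`: `Zf = ⟨Z, ∇f⟩`. -/
def Zd {n : ℕ} (A : En n → Matrix (Fin n) (Fin n) ℝ) (f : En n → ℝ) (x : En n) : ℝ :=
  ∑ i, Zvec A x i * gradient f x i

/-- Surface integral over the sphere `{|x| = ρ}` w.r.t. the `(n-1)`-dimensional
Hausdorff measure. -/
def sphInt (n : ℕ) (ρ : ℝ) (f : En n → ℝ) : ℝ :=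
  ∫ x in sphere (0 : En n) ρ, f x ∂(μH[(n : ℝ) - 1])

/-- Structural hypotheses on `A`: symmetry, `C¹` entries on `Ω`, uniform ellipticity
`λ|ξ|² ≤ ⟨A(x)ξ,ξ⟩ ≤ λ⁻¹|ξ|²`, and the decay `|x||∇B(x)| + |B(x)| ≤ C|x|^{-α}`
where `B = A - Iₙ` (entrywise). -/
def EllipticDecay {n : ℕ} (A : En n → Matrix (Fin n) (Fin n) ℝ) (lam α C : ℝ) : Prop :=
  (∀ x ∈ OmegaExt n, (A x).IsSymm) ∧
  (∀ i j, ContDiffOn ℝ 1 (fun x => A x i j) (OmegaExt n)) ∧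
  (∀ x ∈ OmegaExt n, ∀ ξ : En n,
      lam * ‖ξ‖ ^ 2 ≤ quadForm (A x) ξ ξ ∧ quadForm (A x) ξ ξ ≤ lam⁻¹ * ‖ξ‖ ^ 2) ∧
  (∀ x ∈ OmegaExt n, ∀ i j,
      ‖x‖ * ‖gradient (fun y => (A y - 1) i j) x‖ + |(A x - 1) i j| ≤ C * ‖x‖ ^ (-α))

/-- `u ∈ C¹(Ω)` is a weak solution of `-div(A∇u) = u` in `Ω`, i.e.
`∫_Ω ⟨A∇u, ∇φ⟩ = ∫_Ω u φ` for every test function `φ ∈ C_c^∞(Ω)`. -/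
def WeakSol {n : ℕ} (A : En n → Matrix (Fin n) (Fin n) ℝ) (u : En n → ℝ) : Prop :=
  ContDiffOn ℝ 1 u (OmegaExt n) ∧
  ∀ φ : En n → ℝ, ContDiff ℝ (⊤ : ℕ∞) φ → HasCompactSupport φ → tsupport φ ⊆ OmegaExt n →
    (∫ x in OmegaExt n, ∑ i, (A x).mulVec (fun j => gradient u x j) i * gradient φ x i) =
    ∫ x in OmegaExt n, u x * φ x

/-- The functional `G(ρ)` associated with a solution `u`, where `w = r^{(n-1)/2} u`. -/
def Gfun {n : ℕ} (A : En n → Matrix (Fin n) (Fin n) ℝ) (u : En n → ℝ) (ρ : ℝ) : ℝ :=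
  let w : En n → ℝ := fun x => ‖x‖ ^ (((n : ℝ) - 1) / 2) * u x
  2 * sphInt n ρ (fun x => (Zd A w x / ‖x‖) ^ 2 * muA A x)
    - sphInt n ρ (fun x => quadForm (A x) (gradient w x) (gradient w x))
    + sphInt n ρ (fun x => (w x) ^ 2)
    - ((n : ℝ) - 1) * ((n : ℝ) - 3) / 4 * sphInt n ρ (fun x => (w x) ^ 2 / ‖x‖ ^ 2 * muA A x)

/-!
With `w = r^{(n-1)/2} u`, the Cauchy–Schwarz inequality for the form `⟨A ·, ·⟩` gives
`(Zw/r)² μ ≤ ⟨A∇w, ∇w⟩`, so the gradient term of `G` absorbs one of the two copies of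
`(Zw/r)² μ`. Since `Zr = r`, we have `Zw = r^{(n-1)/2} (Zu + (n-1)/2 · u)`, and `μ` is bounded;
hence the integrand of `G(ρ)` is at most `K ρ^{n-1} ((Zu/r)² μ + u²)` pointwise on `∂B_ρ`.
Integrating and dividing the hypothesis on `G` by `K ρ^{n-1}` gives the bound. The integrals are
of continuous functions over a set of finite Hausdorff measure: the unit sphere is covered by two
hemispheres, each contained in the image of a ball under a smooth stereographic chart.
-/

section HausdorffSphere

open Module

lemma hausdorffMeasure_image_lt_top_of_isCompact {F X : Type*} [NormedAddCommGroup F]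
    [NormedSpace ℝ F] [FiniteDimensional ℝ F] [MetricSpace X] [MeasurableSpace X] [BorelSpace X]
    {f : F → X} {s : Set F} (hs : IsCompact s) (hf : LocallyLipschitzOn s f) :
    μH[finrank ℝ F] (f '' s) < ⊤ := by
  borelize F
  obtain ⟨K, hK⟩ := hf.exists_lipschitzOnWith_of_compact hs
  calc μH[finrank ℝ F] (f '' s)
      ≤ (K : ENNReal) ^ (finrank ℝ F : ℝ) * μH[finrank ℝ F] s :=
        hK.hausdorffMeasure_image_le (Nat.cast_nonneg _)
    _ < ⊤ := ENNReal.mul_lt_top (by finiteness) hs.measure_lt_top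

variable {E : Type*} [NormedAddCommGroup E] [InnerProductSpace ℝ E]

lemma hemisphere_subset_image_stereoInvFun {v : E} (hv : ‖v‖ = 1) :
    sphere (0 : E) 1 ∩ {x | inner ℝ v x ≤ 0} ⊆
      (fun y => (stereoInvFun hv y : E)) '' closedBall 0 2 := by
  rintro x ⟨hx, hvx⟩
  rw [Set.mem_ofPred_eq] at hvx
  have hxv : x ≠ v := by
    rintro rfl
    rw [real_inner_self_eq_norm_sq, hv] at hvx
    norm_num at hvx
  have hinv : (stereoInvFun hv (stereoToFun v x) : E) = x :=
    congrArg Subtype.val (stereo_left_inv (x := ⟨x, hx⟩) hv hxv)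
  refine ⟨stereoToFun v x, ?_, hinv⟩
  have hscale : |2 / (1 - inner ℝ v x)| ≤ 2 := by
    rw [abs_of_nonneg (div_nonneg zero_le_two (by linarith)), div_le_iff₀ (by linarith)]
    linarith
  rw [mem_closedBall_zero_iff, stereoToFun_apply, norm_smul, Real.norm_eq_abs]
  calc |2 / (1 - inner ℝ v x)| * ‖(ℝ ∙ v)ᗮ.orthogonalProjectionOnto x‖
      ≤ 2 * ‖x‖ := by gcongr; exact (ℝ ∙ v)ᗮ.norm_orthogonalProjectionOnto_apply_le x
    _ = 2 := by rw [mem_sphere_zero_iff_norm.mp hx, mul_one]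

variable [FiniteDimensional ℝ E] [MeasurableSpace E] [BorelSpace E]

lemma hausdorffMeasure_hemisphere_lt_top {v : E} (hv : ‖v‖ = 1) :
    μH[finrank ℝ E - 1] (sphere (0 : E) 1 ∩ {x | inner ℝ v x ≤ 0}) < ⊤ := by
  have hdim : (finrank ℝ E : ℝ) - 1 = finrank ℝ (ℝ ∙ v)ᗮ := by
    have h := (ℝ ∙ v).finrank_add_finrank_orthogonal
    rw [finrank_span_singleton (norm_ne_zero_iff.mp (hv ▸ one_ne_zero))] at h
    rw [← h, Nat.cast_add, Nat.cast_one, add_sub_cancel_left]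
  have hsmooth : ContDiff ℝ 1 fun y => (stereoInvFun hv y : E) :=
    contDiff_stereoInvFunAux.comp (ℝ ∙ v)ᗮ.subtypeL.contDiff
  rw [hdim]
  exact (measure_mono (hemisphere_subset_image_stereoInvFun hv)).trans_lt
    (hausdorffMeasure_image_lt_top_of_isCompact (isCompact_closedBall _ _)
      hsmooth.locallyLipschitz.locallyLipschitzOn)

lemma hausdorffMeasure_unitSphere_lt_top :
    μH[finrank ℝ E - 1] (sphere (0 : E) 1) < ⊤ := by
  rcases subsingleton_or_nontrivial E with hE | hE
  · simp [sphere_eq_empty_of_subsingleton]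
  obtain ⟨v, hv⟩ := exists_norm_eq E zero_le_one
  have hcover : sphere (0 : E) 1 ⊆
      sphere 0 1 ∩ {x | inner ℝ v x ≤ 0} ∪ sphere 0 1 ∩ {x | inner ℝ (-v) x ≤ 0} := by
    intro x hx
    rcases le_total (inner ℝ v x) 0 with h | h
    · exact .inl ⟨hx, h⟩
    · exact .inr ⟨hx, by simpa using h⟩
  exact (measure_mono hcover).trans_lt <| measure_union_lt_top
    (hausdorffMeasure_hemisphere_lt_top hv)
    (hausdorffMeasure_hemisphere_lt_top (by rwa [norm_neg]))

open Pointwise in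
lemma hausdorffMeasure_sphere_lt_top (c : E) {r : ℝ} (hr : r ≠ 0) :
    μH[finrank ℝ E - 1] (sphere c r) < ⊤ := by
  rcases subsingleton_or_nontrivial E with hE | hE
  · simp [sphere_eq_empty_of_subsingleton hr]
  rcases hr.lt_or_gt with hneg | hpos
  · simp [sphere_eq_empty_of_neg hneg]
  have hdim : (0 : ℝ) ≤ finrank ℝ E - 1 := by
    rw [sub_nonneg]
    exact_mod_cast finrank_pos (R := ℝ) (M := E)
  have hsphere : sphere c r = c +ᵥ r • sphere (0 : E) 1 := by
    simp [smul_sphere' hr, abs_of_pos hpos]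
  rw [hsphere, hausdorffMeasure_vadd c (.inl hdim), Measure.hausdorffMeasure_smul₀ hdim hr]
  exact ENNReal.mul_lt_top ENNReal.coe_lt_top hausdorffMeasure_unitSphere_lt_top

lemma integrableOn_sphere (c : E) {r : ℝ} (hr : r ≠ 0) {f : E → ℝ}
    (hf : ContinuousOn f (sphere c r)) : IntegrableOn f (sphere c r) μH[finrank ℝ E - 1] :=
  hf.integrableOn_of_subset_isCompact (isCompact_sphere c r) isClosed_sphere.measurableSet
    subset_rfl (hausdorffMeasure_sphere_lt_top c hr).ne

end HausdorffSphere

section Calculus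

variable {E : Type*} [NormedAddCommGroup E] [InnerProductSpace ℝ E]

lemma hasFDerivAt_norm_rpow_of_ne_zero {x : E} (hx : x ≠ 0) (p : ℝ) :
    HasFDerivAt (fun y : E => ‖y‖ ^ p) ((p * ‖x‖ ^ (p - 2)) • innerSL ℝ x) x := by
  have hsq (y : E) (q : ℝ) : (‖y‖ ^ 2) ^ q = ‖y‖ ^ (2 * q) :=
    (Real.rpow_natCast_mul (norm_nonneg y) 2 q).symm
  have h := (hasStrictFDerivAt_norm_sq x).hasFDerivAt.rpow_const (p := p / 2)
    (.inl (pow_ne_zero 2 (norm_ne_zero_iff.mpr hx)))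
  convert! h using 1
  · simp only [hsq, mul_div_cancel₀ p two_ne_zero]
  · rw [hsq, show 2 * (p / 2 - 1) = p - 2 by ring]
    module

lemma continuousOn_gradient [CompleteSpace E] {f : E → ℝ} {s : Set E} (hs : IsOpen s)
    (hf : ContDiffOn ℝ 1 f s) : ContinuousOn (gradient f) s :=
  (LinearIsometryEquiv.continuous _).comp_continuousOn
    (hf.continuousOn_fderiv_of_isOpen hs le_rfl)

end Calculus

variable {n : ℕ} {A : En n → Matrix (Fin n) (Fin n) ℝ} {x : En n} {u : En n → ℝ}

section QuadForm

variable {M : Matrix (Fin n) (Fin n) ℝ}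

lemma quadForm_eq_toBilin' (ξ η : En n) :
    quadForm M ξ η = Matrix.toBilin' M η.ofLp ξ.ofLp := by
  rw [Matrix.toBilin'_apply', dotProduct_comm]
  rfl

lemma quadForm_self_nonneg (hM : M.PosSemidef) (ξ : En n) : 0 ≤ quadForm M ξ ξ := by
  rw [quadForm_eq_toBilin', Matrix.toBilin'_apply']
  exact hM.dotProduct_mulVec_nonneg ξ.ofLp

lemma quadForm_self_pos (hM : M.PosDef) {ξ : En n} (hξ : ξ ≠ 0) : 0 < quadForm M ξ ξ := by
  rw [quadForm_eq_toBilin', Matrix.toBilin'_apply']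
  exact hM.dotProduct_mulVec_pos (by simpa using hξ)

lemma quadForm_sq_le (hM : M.PosSemidef) (ξ η : En n) :
    quadForm M ξ η ^ 2 ≤ quadForm M ξ ξ * quadForm M η η := by
  have hsymm := Matrix.isSymm_toBilin'_iff_isSymm.mpr (Matrix.isHermitian_iff_isSymm.mp hM.1)
  simp only [quadForm_eq_toBilin', ← hsymm.eq ξ.ofLp η.ofLp]
  refine (Matrix.toBilin' M).apply_sq_le_of_symm (fun ζ => ?_) ⟨hsymm.eq⟩ ξ.ofLp η.ofLp
  rw [Matrix.toBilin'_apply']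
  exact hM.dotProduct_mulVec_nonneg ζ

lemma continuousOn_quadForm {X : Type*} [TopologicalSpace X] {s : Set X}
    {N : X → Matrix (Fin n) (Fin n) ℝ} {f g : X → En n} (hN : ContinuousOn N s)
    (hf : ContinuousOn f s) (hg : ContinuousOn g s) :
    ContinuousOn (fun x => quadForm (N x) (f x) (g x)) s := by
  have hcont : Continuous fun p : Matrix (Fin n) (Fin n) ℝ × En n × En n =>
      quadForm p.1 p.2.1 p.2.2 := by
    unfold quadForm
    fun_prop
  exact hcont.comp_continuousOn (f := fun x => (N x, f x, g x)) (hN.prodMk (hf.prodMk hg))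

end QuadForm

section RadialField

lemma muA_mul_norm_sq (A : En n → Matrix (Fin n) (Fin n) ℝ) (x : En n) :
    muA A x * ‖x‖ ^ 2 = quadForm (A x) x x := by
  rcases eq_or_ne x 0 with rfl | hx
  · simp [quadForm]
  · exact div_mul_cancel₀ _ (pow_ne_zero 2 (norm_ne_zero_iff.mpr hx))

lemma muA_pos (hA : (A x).PosDef) (hx : x ≠ 0) : 0 < muA A x :=
  div_pos (quadForm_self_pos hA hx) (pow_pos (norm_pos_iff.mpr hx) 2)

lemma Zd_eq_inv_muA_mul_quadForm (A : En n → Matrix (Fin n) (Fin n) ℝ) (f : En n → ℝ)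
    (x : En n) : Zd A f x = (muA A x)⁻¹ * quadForm (A x) x (gradient f x) := by
  simp [Zd, Zvec, quadForm, Finset.mul_sum, mul_assoc]

lemma Zd_eq_fderiv (A : En n → Matrix (Fin n) (Fin n) ℝ) (f : En n → ℝ) (x : En n) :
    Zd A f x = fderiv ℝ f x (Zvec A x) := by
  rw [← inner_gradient_left, PiLp.inner_apply]
  simp [Zd]

lemma inner_Zvec (hμ : muA A x ≠ 0) : inner ℝ x (Zvec A x) = ‖x‖ ^ 2 := by
  have h : inner ℝ x (Zvec A x) = (muA A x)⁻¹ * quadForm (A x) x x := by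
    simp [Zvec, quadForm, PiLp.inner_apply, Finset.mul_sum, mul_assoc]
  rw [h, ← muA_mul_norm_sq, inv_mul_cancel_left₀ hμ]

lemma Zd_norm_rpow (hμ : muA A x ≠ 0) (hx : x ≠ 0) (k : ℝ) :
    Zd A (fun y => ‖y‖ ^ k) x = k * ‖x‖ ^ k := by
  have hpow : ‖x‖ ^ k = ‖x‖ ^ (k - 2) * ‖x‖ ^ 2 := by
    rw [← Real.rpow_add_natCast (norm_ne_zero_iff.mpr hx), Nat.cast_ofNat, sub_add_cancel]
  rw [Zd_eq_fderiv, (hasFDerivAt_norm_rpow_of_ne_zero hx k).fderiv, smul_apply,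
    innerSL_apply_apply, inner_Zvec hμ, hpow, smul_eq_mul, mul_assoc]

lemma Zd_mul {f g : En n → ℝ} (hf : DifferentiableAt ℝ f x) (hg : DifferentiableAt ℝ g x) :
    Zd A (fun y => f y * g y) x = f x * Zd A g x + Zd A f x * g x := by
  simp only [Zd_eq_fderiv, fderiv_fun_mul hf hg, add_apply, smul_apply, smul_eq_mul]
  ring

lemma Zd_norm_rpow_mul (hμ : muA A x ≠ 0) (hx : x ≠ 0) (hu : DifferentiableAt ℝ u x) (k : ℝ) :
    Zd A (fun y => ‖y‖ ^ k * u y) x = ‖x‖ ^ k * (Zd A u x + k * u x) := by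
  rw [Zd_mul (hasFDerivAt_norm_rpow_of_ne_zero hx k).differentiableAt hu, Zd_norm_rpow hμ hx]
  ring

lemma sq_Zd_div_norm_mul_muA_le (hA : (A x).PosSemidef) (f : En n → ℝ) :
    (Zd A f x / ‖x‖) ^ 2 * muA A x ≤ quadForm (A x) (gradient f x) (gradient f x) := by
  calc (Zd A f x / ‖x‖) ^ 2 * muA A x
      = quadForm (A x) x (gradient f x) ^ 2 / quadForm (A x) x x := by
        rw [Zd_eq_inv_muA_mul_quadForm, ← muA_mul_norm_sq]
        field_simp
    _ ≤ quadForm (A x) (gradient f x) (gradient f x) :=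
        div_le_of_le_mul₀ (quadForm_self_nonneg hA x) (quadForm_self_nonneg hA _)
          ((quadForm_sq_le hA x (gradient f x)).trans_eq (mul_comm _ _))

end RadialField

section Densities

/-- The integrand of `G(ρ)` as a function of `w`, with an arbitrary zero-order coefficient `c` in
place of `(n-1)(n-3)/4`. -/
def gDensity (A : En n → Matrix (Fin n) (Fin n) ℝ) (c : ℝ) (w : En n → ℝ) (x : En n) : ℝ :=
  2 * ((Zd A w x / ‖x‖) ^ 2 * muA A x) - quadForm (A x) (gradient w x) (gradient w x)
    + w x ^ 2 - c * (w x ^ 2 / ‖x‖ ^ 2 * muA A x)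

/-- The surface energy density `(Zu/r)² μ + u²`, whose integral over spheres is to be bounded
below. -/
def energyDensity (A : En n → Matrix (Fin n) (Fin n) ℝ) (u : En n → ℝ) (x : En n) : ℝ :=
  (Zd A u x / ‖x‖) ^ 2 * muA A x + u x ^ 2

lemma gDensity_le (hA : (A x).PosDef) (hx : x ≠ 0) (c : ℝ) (w : En n → ℝ) :
    gDensity A c w x ≤
      (Zd A w x / ‖x‖) ^ 2 * muA A x + w x ^ 2 + |c| * (w x ^ 2 / ‖x‖ ^ 2 * muA A x) := by
  have hCS := sq_Zd_div_norm_mul_muA_le hA.posSemidef w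
  have hμ := muA_pos hA hx
  have hc : -c * (w x ^ 2 / ‖x‖ ^ 2 * muA A x) ≤ |c| * (w x ^ 2 / ‖x‖ ^ 2 * muA A x) := by
    gcongr
    exact neg_le_abs c
  rw [gDensity]
  linarith

lemma rescaled_energy_le {m r Λ : ℝ} (hm : 0 ≤ m) (hΛ : m / r ^ 2 ≤ Λ) (T z v c k : ℝ) :
    (T * (z + k * v) / r) ^ 2 * m + (T * v) ^ 2 + |c| * ((T * v) ^ 2 / r ^ 2 * m) ≤
      (2 + (2 * k ^ 2 + |c|) * Λ) * T ^ 2 * ((z / r) ^ 2 * m + v ^ 2) := by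
  have hΛ0 : 0 ≤ Λ := (div_nonneg hm (sq_nonneg r)).trans hΛ
  calc (T * (z + k * v) / r) ^ 2 * m + (T * v) ^ 2 + |c| * ((T * v) ^ 2 / r ^ 2 * m)
      = T ^ 2 * ((z / r + k * (v / r)) ^ 2 * m + v ^ 2 + |c| * (m / r ^ 2) * v ^ 2) := by ring
    _ ≤ T ^ 2 * (2 * ((z / r) ^ 2 + (k * (v / r)) ^ 2) * m + v ^ 2
          + |c| * (m / r ^ 2) * v ^ 2) := by
        gcongr
        exact add_sq_le
    _ = T ^ 2 * (2 * ((z / r) ^ 2 * m) + (1 + (2 * k ^ 2 + |c|) * (m / r ^ 2)) * v ^ 2) := by ring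
    _ ≤ T ^ 2 * ((2 + (2 * k ^ 2 + |c|) * Λ) * ((z / r) ^ 2 * m)
          + (2 + (2 * k ^ 2 + |c|) * Λ) * v ^ 2) := by
        gcongr
        · exact le_add_of_nonneg_right (by positivity)
        · norm_num
    _ = (2 + (2 * k ^ 2 + |c|) * Λ) * T ^ 2 * ((z / r) ^ 2 * m + v ^ 2) := by ring

lemma gDensity_norm_rpow_mul_le (hA : (A x).PosDef) (hx : 1 ≤ ‖x‖) {Λ : ℝ} (hΛ : muA A x ≤ Λ)
    (hu : DifferentiableAt ℝ u x) (c k : ℝ) :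
    gDensity A c (fun y => ‖y‖ ^ k * u y) x ≤
      (2 + (2 * k ^ 2 + |c|) * Λ) * ‖x‖ ^ (2 * k) * energyDensity A u x := by
  have hx0 : x ≠ 0 := norm_pos_iff.mp (one_pos.trans_le hx)
  have hμ : 0 < muA A x := muA_pos hA hx0
  have hratio : muA A x / ‖x‖ ^ 2 ≤ Λ := (div_le_self hμ.le (one_le_pow₀ hx)).trans hΛ
  have hpow : ‖x‖ ^ (2 * k) = (‖x‖ ^ k) ^ 2 := by
    simpa only [mul_comm, Nat.cast_ofNat] using Real.rpow_mul_natCast (norm_nonneg x) k 2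
  refine (gDensity_le hA hx0 c _).trans ?_
  rw [Zd_norm_rpow_mul hμ.ne' hx0 hu, hpow]
  exact rescaled_energy_le hμ.le hratio ..

end Densities

section Continuity

lemma isOpen_OmegaExt (n : ℕ) : IsOpen (OmegaExt n) := isOpen_lt continuous_const continuous_norm

lemma ne_zero_of_mem_OmegaExt (hx : x ∈ OmegaExt n) : x ≠ 0 :=
  norm_pos_iff.mp (one_pos.trans hx)

variable (hA : ContinuousOn A (OmegaExt n))
include hA

lemma continuousOn_muA : ContinuousOn (muA A) (OmegaExt n) :=
  (continuousOn_quadForm hA continuousOn_id continuousOn_id).div (by fun_prop) fun _ hx =>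
    pow_ne_zero 2 (norm_ne_zero_iff.mpr (ne_zero_of_mem_OmegaExt hx))

lemma continuousOn_sq_div_norm_sq_mul_muA {w : En n → ℝ} (hw : ContinuousOn w (OmegaExt n)) :
    ContinuousOn (fun x => w x ^ 2 / ‖x‖ ^ 2 * muA A x) (OmegaExt n) :=
  ((hw.pow 2).div (continuousOn_id.norm.pow 2) fun _ hx =>
    pow_ne_zero 2 (norm_ne_zero_iff.mpr (ne_zero_of_mem_OmegaExt hx))).mul (continuousOn_muA hA)

variable (hpos : ∀ x ∈ OmegaExt n, (A x).PosDef)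
include hpos

lemma continuousOn_sq_Zd_div_norm_mul_muA (hu : ContDiffOn ℝ 1 u (OmegaExt n)) :
    ContinuousOn (fun x => (Zd A u x / ‖x‖) ^ 2 * muA A x) (OmegaExt n) := by
  have hZd : ContinuousOn (Zd A u) (OmegaExt n) := by
    simp only [funext (Zd_eq_inv_muA_mul_quadForm A u)]
    exact ((continuousOn_muA hA).inv₀ fun x hx =>
        (muA_pos (hpos x hx) (ne_zero_of_mem_OmegaExt hx)).ne').mul
      (continuousOn_quadForm hA continuousOn_id (continuousOn_gradient (isOpen_OmegaExt n) hu))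
  exact ((hZd.div continuousOn_id.norm fun _ hx =>
    norm_ne_zero_iff.mpr (ne_zero_of_mem_OmegaExt hx)).pow 2).mul (continuousOn_muA hA)

lemma continuousOn_energyDensity (hu : ContDiffOn ℝ 1 u (OmegaExt n)) :
    ContinuousOn (energyDensity A u) (OmegaExt n) :=
  (continuousOn_sq_Zd_div_norm_mul_muA hA hpos hu).add (hu.continuousOn.pow 2)

lemma continuousOn_gDensity (c : ℝ) {w : En n → ℝ} (hw : ContDiffOn ℝ 1 w (OmegaExt n)) :
    ContinuousOn (gDensity A c w) (OmegaExt n) := by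
  have hgrad := continuousOn_gradient (isOpen_OmegaExt n) hw
  exact ((((continuousOn_sq_Zd_div_norm_mul_muA hA hpos hw).const_mul 2).sub
    (continuousOn_quadForm hA hgrad hgrad)).add (hw.continuousOn.pow 2)).sub
      ((continuousOn_sq_div_norm_sq_mul_muA hA hw.continuousOn).const_mul c)

end Continuity

section SurfaceIntegrals

lemma sphere_subset_OmegaExt {ρ : ℝ} (hρ : 1 < ρ) : sphere (0 : En n) ρ ⊆ OmegaExt n :=
  fun _ hx => hρ.trans_eq (mem_sphere_zero_iff_norm.mp hx).symm

lemma integrableOn_sphere_of_continuousOn_OmegaExt {f : En n → ℝ} {ρ : ℝ} (hρ : 1 < ρ)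
    (hf : ContinuousOn f (OmegaExt n)) : IntegrableOn f (sphere 0 ρ) μH[(n : ℝ) - 1] := by
  simpa using integrableOn_sphere 0 (one_pos.trans hρ).ne' (hf.mono (sphere_subset_OmegaExt hρ))

lemma contDiffOn_norm_rpow_mul (hu : ContDiffOn ℝ 1 u (OmegaExt n)) (k : ℝ) :
    ContDiffOn ℝ 1 (fun x => ‖x‖ ^ k * u x) (OmegaExt n) := by
  have hne (x : En n) (hx : x ∈ OmegaExt n) : x ≠ 0 := ne_zero_of_mem_OmegaExt hx
  exact ((contDiffOn_id.norm ℝ hne).rpow_const_of_ne fun x hx =>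
    norm_ne_zero_iff.mpr (hne x hx)).mul hu

variable (hA : ContinuousOn A (OmegaExt n)) (hpos : ∀ x ∈ OmegaExt n, (A x).PosDef)
include hA hpos

lemma sphInt_energyDensity (hu : ContDiffOn ℝ 1 u (OmegaExt n)) {ρ : ℝ} (hρ : 1 < ρ) :
    sphInt n ρ (energyDensity A u) =
      sphInt n ρ (fun x => (Zd A u x / ‖x‖) ^ 2 * muA A x) + sphInt n ρ (fun x => u x ^ 2) :=
  integral_add
    (integrableOn_sphere_of_continuousOn_OmegaExt hρ
      (continuousOn_sq_Zd_div_norm_mul_muA hA hpos hu))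
    (integrableOn_sphere_of_continuousOn_OmegaExt hρ (hu.continuousOn.pow 2))

lemma sphInt_gDensity (c : ℝ) {w : En n → ℝ} (hw : ContDiffOn ℝ 1 w (OmegaExt n)) {ρ : ℝ}
    (hρ : 1 < ρ) :
    sphInt n ρ (gDensity A c w) =
      2 * sphInt n ρ (fun x => (Zd A w x / ‖x‖) ^ 2 * muA A x)
        - sphInt n ρ (fun x => quadForm (A x) (gradient w x) (gradient w x))
        + sphInt n ρ (fun x => w x ^ 2)
        - c * sphInt n ρ (fun x => w x ^ 2 / ‖x‖ ^ 2 * muA A x) := by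
  have hint {f : En n → ℝ} (hf : ContinuousOn f (OmegaExt n)) :
      IntegrableOn f (sphere 0 ρ) μH[(n : ℝ) - 1] :=
    integrableOn_sphere_of_continuousOn_OmegaExt hρ hf
  have hgrad := continuousOn_gradient (isOpen_OmegaExt n) hw
  have hZ := (hint (continuousOn_sq_Zd_div_norm_mul_muA hA hpos hw)).const_mul 2
  have hQ := hint (continuousOn_quadForm hA hgrad hgrad)
  have hw2 := hint (hw.continuousOn.pow 2)
  have hμ := (hint (continuousOn_sq_div_norm_sq_mul_muA hA hw.continuousOn)).const_mul c
  calc sphInt n ρ (gDensity A c w)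
      = sphInt n ρ (fun x => 2 * ((Zd A w x / ‖x‖) ^ 2 * muA A x))
          - sphInt n ρ (fun x => quadForm (A x) (gradient w x) (gradient w x))
          + sphInt n ρ (fun x => w x ^ 2)
          - sphInt n ρ (fun x => c * (w x ^ 2 / ‖x‖ ^ 2 * muA A x)) :=
        (integral_sub ((hZ.sub hQ).add hw2) hμ).trans <| congrArg (· - _) <|
          (integral_add (hZ.sub hQ) hw2).trans <| congrArg (· + _) <| integral_sub hZ hQ
    _ = _ := by simp only [sphInt, integral_const_mul]

lemma exists_Gfun_le (hμ : BddAbove (muA A '' OmegaExt n)) :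
    ∃ K > (0 : ℝ), ∀ u, ContDiffOn ℝ 1 u (OmegaExt n) → ∀ ρ > (1 : ℝ),
      Gfun A u ρ ≤ K * ρ ^ ((n : ℝ) - 1) * sphInt n ρ (energyDensity A u) := by
  obtain ⟨Λ, hΛ0, hΛ⟩ := hμ.exists_ge 0
  set k : ℝ := ((n : ℝ) - 1) / 2 with hk
  set c : ℝ := ((n : ℝ) - 1) * ((n : ℝ) - 3) / 4
  refine ⟨2 + (2 * k ^ 2 + |c|) * Λ, by positivity, fun u hu ρ hρ => ?_⟩
  have hw := contDiffOn_norm_rpow_mul hu k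
  have hG_int := integrableOn_sphere_of_continuousOn_OmegaExt hρ
    (continuousOn_gDensity hA hpos c hw)
  have hE_int := integrableOn_sphere_of_continuousOn_OmegaExt hρ
    (continuousOn_energyDensity hA hpos hu)
  have hpointwise (x : En n) (hx : x ∈ sphere 0 ρ) :
      gDensity A c (fun y => ‖y‖ ^ k * u y) x ≤
        (2 + (2 * k ^ 2 + |c|) * Λ) * ρ ^ ((n : ℝ) - 1) * energyDensity A u x := by
    have hxΩ := sphere_subset_OmegaExt hρ hx
    have h := gDensity_norm_rpow_mul_le (hpos x hxΩ) (le_of_lt hxΩ)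
      (hΛ _ (Set.mem_image_of_mem _ hxΩ))
      ((hu.differentiableOn one_ne_zero).differentiableAt ((isOpen_OmegaExt n).mem_nhds hxΩ)) c k
    rwa [mem_sphere_zero_iff_norm.mp hx, hk, mul_div_cancel₀ _ two_ne_zero, ← hk] at h
  calc Gfun A u ρ = sphInt n ρ (gDensity A c fun y => ‖y‖ ^ k * u y) :=
        (sphInt_gDensity hA hpos c hw hρ).symm
    _ ≤ sphInt n ρ fun x =>
          (2 + (2 * k ^ 2 + |c|) * Λ) * ρ ^ ((n : ℝ) - 1) * energyDensity A u x :=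
        setIntegral_mono_on hG_int (hE_int.const_mul _) isClosed_sphere.measurableSet hpointwise
    _ = _ := integral_const_mul _ _

end SurfaceIntegrals

section EllipticDecay

variable {lam α C : ℝ}

lemma EllipticDecay.continuousOn (hA : EllipticDecay A lam α C) : ContinuousOn A (OmegaExt n) :=
  continuousOn_pi.mpr fun i => continuousOn_pi.mpr fun j => (hA.2.1 i j).continuousOn

lemma EllipticDecay.posDef (hA : EllipticDecay A lam α C) (hlam : 0 < lam)
    (hx : x ∈ OmegaExt n) : (A x).PosDef := by
  refine .of_dotProduct_mulVec_pos (Matrix.isHermitian_iff_isSymm.mpr (hA.1 x hx)) fun ξ hξ => ?_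
  have h := (hA.2.2.1 x hx (WithLp.toLp 2 ξ)).1
  rw [quadForm_eq_toBilin', Matrix.toBilin'_apply'] at h
  exact (mul_pos hlam (pow_pos (norm_pos_iff.mpr (by simpa using hξ)) 2)).trans_le h

lemma EllipticDecay.bddAbove_muA (hA : EllipticDecay A lam α C) :
    BddAbove (muA A '' OmegaExt n) := by
  refine ⟨lam⁻¹, ?_⟩
  rintro _ ⟨x, hx, rfl⟩
  rw [muA, div_le_iff₀ (pow_pos (norm_pos_iff.mpr (ne_zero_of_mem_OmegaExt hx)) 2)]
  exact (hA.2.2.1 x hx x).2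

end EllipticDecay

theorem sphere_lower_bound_general (hA : ContinuousOn A (OmegaExt n))
    (hpos : ∀ x ∈ OmegaExt n, (A x).PosDef) (hμ : BddAbove (muA A '' OmegaExt n))
    (hu : ContDiffOn ℝ 1 u (OmegaExt n)) {δ C₂ R₂ : ℝ} (hC₂ : 0 < C₂) (hR₂ : 1 < R₂)
    (hG : ∀ ρ ≥ R₂, C₂ * ρ ^ ((n : ℝ) - 1 - δ) ≤ Gfun A u ρ) :
    ∃ C₄ > (0 : ℝ), ∀ ρ ≥ R₂,
      C₄ * ρ ^ (-δ) ≤ sphInt n ρ (fun x => (Zd A u x / ‖x‖) ^ 2 * muA A x)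
          + sphInt n ρ (fun x => (u x) ^ 2) := by
  obtain ⟨K, hK, hle⟩ := exists_Gfun_le hA hpos hμ
  refine ⟨C₂ / K, div_pos hC₂ hK, fun ρ hρ => ?_⟩
  have hρ1 : 1 < ρ := hR₂.trans_le hρ
  have hρ0 : 0 < ρ := one_pos.trans hρ1
  have hscaled : ρ ^ ((n : ℝ) - 1) * (C₂ * ρ ^ (-δ)) ≤
      ρ ^ ((n : ℝ) - 1) * (K * sphInt n ρ (energyDensity A u)) :=
    calc ρ ^ ((n : ℝ) - 1) * (C₂ * ρ ^ (-δ)) = C₂ * ρ ^ ((n : ℝ) - 1 - δ) := by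
          rw [sub_eq_add_neg _ δ, Real.rpow_add hρ0, mul_left_comm]
      _ ≤ Gfun A u ρ := hG ρ hρ
      _ ≤ K * ρ ^ ((n : ℝ) - 1) * sphInt n ρ (energyDensity A u) := hle u hu ρ hρ1
      _ = ρ ^ ((n : ℝ) - 1) * (K * sphInt n ρ (energyDensity A u)) := by ring
  rw [← sphInt_energyDensity hA hpos hu hρ1, div_mul_eq_mul_div, div_le_iff₀' hK]
  exact le_of_mul_le_mul_left hscaled (Real.rpow_pos_of_pos hρ0 _)

/-- **estimate `c4`.** If `G(ρ) ≥ C₂ ρ^{n-1-δ}` for all `ρ ≥ R₂`, then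
there are `C₄ > 0` and `R₃ ≥ R₂` with
`∫_{∂B_ρ} (Zu/r)² μ + ∫_{∂B_ρ} u² ≥ C₄ ρ^{-δ}` for all `ρ ≥ R₃`. -/
theorem sphere_lower_bound
    (n : ℕ) (hn : 2 ≤ n)
    (A : En n → Matrix (Fin n) (Fin n) ℝ) (lam α C : ℝ)
    (hlam0 : 0 < lam) (hlam1 : lam < 1) (hα : 0 < α) (hC : 0 < C)
    (hA : EllipticDecay A lam α C)
    (u : En n → ℝ) (hu : WeakSol A u)
    (δ : ℝ) (hδ : δ ∈ Set.Ioo (0 : ℝ) 1)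
    (C₂ R₂ : ℝ) (hC₂ : 0 < C₂) (hR₂ : 1 < R₂)
    (hG : ∀ ρ ≥ R₂, C₂ * ρ ^ ((n : ℝ) - 1 - δ) ≤ Gfun A u ρ) :
    ∃ C₄ > (0 : ℝ), ∃ R₃ ≥ R₂, ∀ ρ ≥ R₃,
      C₄ * ρ ^ (-δ) ≤ sphInt n ρ (fun x => (Zd A u x / ‖x‖) ^ 2 * muA A x)
          + sphInt n ρ (fun x => (u x) ^ 2) := by
  obtain ⟨C₄, hC₄, h⟩ := sphere_lower_bound_general hA.continuousOn (fun _ => hA.posDef hlam0)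
    hA.bddAbove_muA hu.1 hC₂ hR₂ hG
  exact ⟨C₄, hC₄, R₂, le_rfl, h⟩

end
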